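/- Let (X,d) be a metric space, 0 < α < 1 and ε := arccos(α)/2. Let x ∈ X and R > 0, and suppose there is L ∈ ℕ such that every p ∈ B_R(x) satisfies the ATB(ε) condition with constants L and 2R. Then there exists N ∈ ℕ, depending only on L, such that if a metric space (Y,d_Y) has cardinality at least N, then its α-snowflake (Y, d_Y^α) admits no isometric embedding into B_R(x). -/

import Mathlib

/-- The Euclidean comparison angle `∠̃ x p y`. -/
noncomputable def compAngle {X : Type*} [MetricSpace X] (p x y : X) : ℝ :=
  Real.arccos ((dist x p ^ 2 + dist y p ^ 2 - dist x y ^ 2) / (2 * dist x p * dist y p))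

/-- The point `p` satisfies the `ATB(ε)` condition with constants `L` and `R`. -/
def ATBPoint {X : Type*} [MetricSpace X] (ε : ℝ) (p : X) (L : ℕ) (R : ℝ) : Prop :=
  ∀ y : Fin L → X, (∀ i, y i ∈ Metric.ball p R ∧ y i ≠ p) →
    ∃ i j, i ≠ j ∧ compAngle p (y i) (y j) < ε

/-! Bernoulli's inequality gives `(u + v) ^ α ≤ u ^ α + α * v ^ α` for `v ≤ u`; after squaring, this
says that every comparison angle in an `α`-snowflake is at most `π - arccos α`. Comparison angles of
a triangle add up to `π`, so no triangle has two angles smaller than `ε = arccos α / 2`. In a large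
set, Ramsey's theorem and the ATB condition at a point `p` give a large subset all of whose pairs
subtend an angle `< ε` at `p`. Iterating inside that subset produces a sequence `p₁, p₂, …, q` such
that, for `i < j`, the angle at `pᵢ` between `pⱼ` and `q` is small. Hence the angle at `q` between
`pᵢ` and `pⱼ` is not, and a sequence of length `L + 1` contradicts ATB at `q`. -/

open Finset EuclideanGeometry

section Ramsey

variable {V : Type*}

theorem exists_isNClique_or_isNIndepSet_of_choose_le_card (G : SimpleGraph V) (k l : ℕ)
    (s : Finset V) (hs : (k + l).choose k ≤ #s) :
    (∃ t ⊆ s, G.IsNClique k t) ∨ ∃ t ⊆ s, G.IsNIndepSet l t := by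
  classical
  simp only [← SimpleGraph.isNClique_compl]
  induction k generalizing l s with
  | zero => exact .inl ⟨∅, by simp⟩
  | succ k ihk =>
    induction l generalizing s with
    | zero => exact .inr ⟨∅, by simp⟩
    | succ l ihl =>
      have pascal : (k + 1 + (l + 1)).choose (k + 1)
          = (k + (l + 1)).choose k + (k + 1 + l).choose (k + 1) := by
        rw [show k + 1 + (l + 1) = k + (l + 1) + 1 by ring, Nat.choose_succ_succ',
          show k + (l + 1) = k + 1 + l by ring]
      have choose_pos : 0 < (k + (l + 1)).choose k := Nat.choose_pos (by lia)
      obtain ⟨p, hp⟩ : s.Nonempty := card_pos.mp (by lia)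
      let nbrs := {a ∈ s.erase p | G.Adj p a}
      let nonnbrs := {a ∈ s.erase p | ¬ G.Adj p a}
      have nbrs_subset : nbrs ⊆ s := (filter_subset _ _).trans (erase_subset _ _)
      have nonnbrs_subset : nonnbrs ⊆ s := (filter_subset _ _).trans (erase_subset _ _)
      have card_split : #nbrs + #nonnbrs = #s - 1 := by
        rw [card_filter_add_card_filter_not, card_erase_of_mem hp]
      obtain h | h : (k + (l + 1)).choose k ≤ #nbrs ∨ (k + 1 + l).choose (k + 1) ≤ #nonnbrs := by
        lia
      · refine (ihk (l + 1) nbrs h).imp ?_ fun ⟨t, ht, hl⟩ ↦ ⟨t, ht.trans nbrs_subset, hl⟩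
        rintro ⟨t, ht, hk⟩
        exact ⟨insert p t, insert_subset hp (ht.trans nbrs_subset),
          hk.insert fun a ha ↦ (mem_filter.mp (ht ha)).2⟩
      · refine (ihl nonnbrs h).imp (fun ⟨t, ht, hk⟩ ↦ ⟨t, ht.trans nonnbrs_subset, hk⟩) ?_
        rintro ⟨t, ht, hl⟩
        refine ⟨insert p t, insert_subset hp (ht.trans nonnbrs_subset), hl.insert fun a ha ↦ ?_⟩
        obtain ⟨ha, hpa⟩ := mem_filter.mp (ht ha)
        exact (SimpleGraph.compl_adj G p a).mpr ⟨(ne_of_mem_erase ha).symm, hpa⟩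

/-- A Ramsey-type bound. In a family of graphs `G p` indexed by their own vertices, subject to
`exists_isNIndepSet_of_vertexIndepBound_le_card`, this many vertices force some vertex `q` to come
with an `m`-element set independent in `G q`. The step `m + 1` asks for a vertex `p` and, by the
binomial Ramsey bound, a clique of `G p` large enough for the step `m`. -/
def vertexIndepBound (L : ℕ) : ℕ → ℕ
  | 0 => 1
  | m + 1 => (vertexIndepBound L m + L).choose (vertexIndepBound L m) + 1

theorem exists_isNIndepSet_of_vertexIndepBound_le_card [DecidableEq V] {G : V → SimpleGraph V}
    {L : ℕ} {s : Finset V}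
    (hexcl : ∀ p ∈ s, ∀ a ∈ s, ∀ b ∈ s, p ≠ a → p ≠ b → (G p).Adj a b → ¬ (G a).Adj p b)
    (hindep : ∀ p ∈ s, ∀ t ⊆ s.erase p, ¬ (G p).IsNIndepSet L t)
    (m : ℕ) (hs : vertexIndepBound L m ≤ #s) :
    ∃ q ∈ s, ∃ t ⊆ s.erase q, (G q).IsNIndepSet m t := by
  induction m generalizing s with
  | zero =>
    obtain ⟨q, hq⟩ : s.Nonempty := card_pos.mp hs
    exact ⟨q, hq, ∅, by simp, by simp [SimpleGraph.isNIndepSet_iff]⟩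
  | succ m ih =>
    rw [vertexIndepBound] at hs
    obtain ⟨p, hp⟩ : s.Nonempty := card_pos.mp (by lia)
    obtain ⟨K, hK, hclique⟩ : ∃ K ⊆ s.erase p, (G p).IsNClique (vertexIndepBound L m) K :=
      (exists_isNClique_or_isNIndepSet_of_choose_le_card (G p) _ L (s.erase p)
        (by rw [card_erase_of_mem hp]; lia)).resolve_right
        fun ⟨t, ht, hL⟩ ↦ hindep p hp t ht hL
    have hKs : K ⊆ s := hK.trans (erase_subset _ _)
    have ne_of_mem_K {a : V} (ha : a ∈ K) : p ≠ a := (ne_of_mem_erase (hK ha)).symm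
    obtain ⟨q, hq, t, ht, hm⟩ := ih
      (fun p hp a ha b hb ↦ hexcl p (hKs hp) a (hKs ha) b (hKs hb))
      (fun p hp t ht ↦ hindep p (hKs hp) t (ht.trans (erase_subset_erase p hKs))) hclique.card_eq.ge
    refine ⟨q, hKs hq, insert p t, insert_subset ?_ (ht.trans (erase_subset_erase q hKs)), ?_⟩
    · exact mem_erase.mpr ⟨ne_of_mem_K hq, hp⟩
    rw [← SimpleGraph.isNClique_compl] at hm ⊢
    refine hm.insert fun a ha ↦ ?_
    obtain ⟨haq, haK⟩ := mem_erase.mp (ht ha)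
    have hadj : (G p).Adj q a := hclique.isClique hq haK haq.symm
    exact (SimpleGraph.compl_adj _ _ _).mpr ⟨ne_of_mem_K haK,
      hexcl p hp q (hKs hq) a (hKs haK) (ne_of_mem_K hq) (ne_of_mem_K haK) hadj⟩

end Ramsey

section ComparisonAngle

variable {X : Type*} [MetricSpace X]

theorem compAngle_comm (p x y : X) : compAngle p x y = compAngle p y x := by
  simp only [compAngle, dist_comm x y, add_comm (dist x p ^ 2), mul_right_comm]

theorem compAngle_eq_angle {V P : Type*} [NormedAddCommGroup V] [InnerProductSpace ℝ V]
    [MetricSpace P] [NormedAddTorsor V P] (p x y : P) : compAngle p x y = ∠ x p y := by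
  rw [compAngle, EuclideanGeometry.angle, InnerProductGeometry.angle,
    real_inner_eq_norm_mul_self_add_norm_mul_self_sub_norm_sub_mul_self_div_two,
    vsub_sub_vsub_cancel_right, ← dist_eq_norm_vsub V x p, ← dist_eq_norm_vsub V y p,
    ← dist_eq_norm_vsub V x y]
  simp only [← sq, div_div, mul_assoc]

theorem law_cos_compAngle {p x y : X} (hx : x ≠ p) (hy : y ≠ p) :
    dist x y ^ 2 = dist x p ^ 2 + dist y p ^ 2
      - 2 * dist x p * dist y p * Real.cos (compAngle p x y) := by
  have hxp : 0 < dist x p := dist_pos.mpr hx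
  have hyp : 0 < dist y p := dist_pos.mpr hy
  have le_add : dist x y ≤ dist x p + dist y p := dist_triangle_right x y p
  have abs_sub_le : |dist x p - dist y p| ≤ dist x y := abs_dist_sub_le x y p
  have sq_sub_le : (dist x p - dist y p) ^ 2 ≤ dist x y ^ 2 :=
    sq_le_sq' (neg_le_of_abs_le abs_sub_le) (le_of_abs_le abs_sub_le)
  have sq_le_sq_add : dist x y ^ 2 ≤ (dist x p + dist y p) ^ 2 := by gcongr
  rw [compAngle, Real.cos_arccos]
  · field_simp
    ring
  · rw [le_div_iff₀ (by positivity)]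
    linarith
  · rw [div_le_one (by positivity)]
    linarith

theorem exists_comparison_triangle {p x y : X} (hx : x ≠ p) (hy : y ≠ p) :
    ∃ p' x' y' : ℂ, dist x' p' = dist x p ∧ dist y' p' = dist y p ∧ dist x' y' = dist x y := by
  set θ := compAngle p x y
  refine ⟨0, dist x p, dist y p * Complex.exp (θ * Complex.I), by simp, by simp, ?_⟩
  rw [← sq_eq_sq₀ dist_nonneg dist_nonneg, law_cos_compAngle hx hy, Complex.dist_eq,
    Complex.sq_norm, Complex.normSq_apply]
  simp only [Complex.sub_re, Complex.sub_im, Complex.mul_re, Complex.mul_im, Complex.ofReal_re,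
    Complex.ofReal_im, Complex.exp_ofReal_mul_I_re, Complex.exp_ofReal_mul_I_im, zero_mul,
    sub_zero, add_zero, zero_sub, mul_neg, neg_mul, neg_neg]
  linear_combination dist y p ^ 2 * Real.sin_sq_add_cos_sq θ

theorem compAngle_add_compAngle_add_compAngle_eq_pi {p x y : X} (hx : x ≠ p) (hy : y ≠ p) :
    compAngle p x y + compAngle x p y + compAngle y p x = Real.pi := by
  obtain ⟨p', x', y', hxp, hyp, hxy⟩ := exists_comparison_triangle hx hy
  have hne : p' ≠ x' := (dist_pos.mp (hxp ▸ dist_pos.mpr hx)).symm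
  have transfer : compAngle p x y + compAngle x p y + compAngle y p x
      = compAngle p' x' y' + compAngle x' p' y' + compAngle y' p' x' := by
    simp only [compAngle, dist_comm p x, dist_comm p y, dist_comm y x, dist_comm p' x',
      dist_comm p' y', dist_comm y' x', hxp, hyp, hxy]
  rw [transfer, compAngle_eq_angle, compAngle_eq_angle, compAngle_eq_angle, add_right_comm,
    angle_comm p' x' y']
  exact angle_add_angle_add_angle_eq_pi y' hne

theorem compAngle_le_pi_sub_arccos {p x y : X} (hx : x ≠ p) (hy : y ≠ p) {c : ℝ}
    (h : dist x y ^ 2 ≤ dist x p ^ 2 + dist y p ^ 2 + 2 * c * (dist x p * dist y p)) :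
    compAngle p x y ≤ Real.pi - Real.arccos c := by
  have hxp : 0 < dist x p := dist_pos.mpr hx
  have hyp : 0 < dist y p := dist_pos.mpr hy
  rw [← Real.arccos_neg, compAngle]
  apply Real.arccos_le_arccos
  rw [le_div_iff₀ (by positivity)]
  linarith

/-- The graph whose edges are the pairs of points subtending a comparison angle less than `ε` at
`p`; it turns the ATB condition at `p` into a bound on independent sets. -/
def smallAngleGraph (ε : ℝ) (p : X) : SimpleGraph X where
  Adj x y := x ≠ y ∧ compAngle p x y < ε
  symm := ⟨fun x y h ↦ ⟨h.1.symm, compAngle_comm p x y ▸ h.2⟩⟩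
  loopless := ⟨fun _ h ↦ h.1 rfl⟩

theorem ATBPoint.not_isNIndepSet_smallAngleGraph {ε R : ℝ} {p : X} {L : ℕ}
    (h : ATBPoint ε p L R) {t : Finset X} (ht : ∀ x ∈ t, x ∈ Metric.ball p R ∧ x ≠ p) :
    ¬ (smallAngleGraph ε p).IsNIndepSet L t := by
  intro hindep
  let e := t.equivFinOfCardEq hindep.card_eq
  obtain ⟨i, j, hij, hangle⟩ := h (fun i ↦ e.symm i) fun i ↦ ht _ (e.symm i).2
  have hne : (e.symm i : X) ≠ e.symm j := fun h ↦ hij (e.symm.injective (Subtype.ext h))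
  exact hindep.isIndepSet (e.symm i).2 (e.symm j).2 hne ⟨hne, hangle⟩

theorem card_lt_vertexIndepBound_of_compAngle_le {ε R : ℝ} {L : ℕ} {s : Finset X}
    (hangle : ∀ p ∈ s, ∀ x ∈ s, ∀ y ∈ s, x ≠ p → y ≠ p → compAngle p x y ≤ Real.pi - 2 * ε)
    (hdist : ∀ p ∈ s, ∀ x ∈ s, dist x p < R) (hatb : ∀ p ∈ s, ATBPoint ε p L R) :
    #s < vertexIndepBound L L := by
  classical
  have hindep : ∀ p ∈ s, ∀ t ⊆ s.erase p, ¬ (smallAngleGraph ε p).IsNIndepSet L t :=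
    fun p hp t ht ↦ (hatb p hp).not_isNIndepSet_smallAngleGraph fun x hx ↦
      ⟨hdist p hp x (mem_of_mem_erase (ht hx)), ne_of_mem_erase (ht hx)⟩
  have hexcl : ∀ p ∈ s, ∀ a ∈ s, ∀ b ∈ s, p ≠ a → p ≠ b →
      (smallAngleGraph ε p).Adj a b → ¬ (smallAngleGraph ε a).Adj p b := by
    rintro p hp a ha b hb hpa hpb ⟨hab, hsmall_p⟩ ⟨-, hsmall_a⟩
    linarith [hangle b hb p hp a ha hpb hab,
      compAngle_add_compAngle_add_compAngle_eq_pi hpa.symm hpb.symm]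
  by_contra! hs
  obtain ⟨q, hq, t, ht, hL⟩ := exists_isNIndepSet_of_vertexIndepBound_le_card hexcl hindep L hs
  exact hindep q hq t ht hL

end ComparisonAngle

section Snowflake

variable {α : ℝ}

theorem add_rpow_le_rpow_add_mul_rpow (hα₀ : 0 ≤ α) (hα₁ : α ≤ 1) {u v : ℝ} (hv : 0 ≤ v)
    (hvu : v ≤ u) : (u + v) ^ α ≤ u ^ α + α * v ^ α := by
  obtain rfl | hv := hv.eq_or_lt
  · rw [add_zero]
    exact le_add_of_nonneg_right (by positivity)
  have hu : 0 < u := hv.trans_le hvu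
  have ratio_le_rpow : v / u ≤ (v / u) ^ α :=
    Real.self_le_rpow_of_le_one (by positivity) (div_le_one_of_le₀ hvu hu.le) hα₁
  calc (u + v) ^ α = u ^ α * (1 + v / u) ^ α := by
        rw [← Real.mul_rpow hu.le (by positivity)]
        congr 1
        field_simp
    _ ≤ u ^ α * (1 + α * (v / u)) := by
        gcongr
        exact rpow_one_add_le_one_add_mul_self (by linarith [div_pos hv hu]) hα₀ hα₁
    _ ≤ u ^ α * (1 + α * (v / u) ^ α) := by gcongr
    _ = u ^ α + α * v ^ α := by
        rw [Real.div_rpow hv.le hu.le]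
        field_simp

theorem sq_rpow_le_of_le_add (hα₀ : 0 ≤ α) (hα₁ : α ≤ 1) {u v w : ℝ} (hu : 0 ≤ u) (hv : 0 ≤ v)
    (hw : 0 ≤ w) (h : w ≤ u + v) :
    (w ^ α) ^ 2 ≤ (u ^ α) ^ 2 + (v ^ α) ^ 2 + 2 * α * (u ^ α * v ^ α) := by
  wlog hvu : v ≤ u generalizing u v
  · linarith [this hv hu (by linarith) (le_of_not_ge hvu)]
  have sq_le_one : α ^ 2 ≤ 1 := pow_le_one₀ hα₀ hα₁
  calc (w ^ α) ^ 2 ≤ (u ^ α + α * v ^ α) ^ 2 := by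
        gcongr
        exact (Real.rpow_le_rpow hw h hα₀).trans (add_rpow_le_rpow_add_mul_rpow hα₀ hα₁ hv hvu)
    _ = (u ^ α) ^ 2 + α ^ 2 * (v ^ α) ^ 2 + 2 * α * (u ^ α * v ^ α) := by ring
    _ ≤ (u ^ α) ^ 2 + (v ^ α) ^ 2 + 2 * α * (u ^ α * v ^ α) := by
        gcongr
        exact mul_le_of_le_one_left (sq_nonneg _) sq_le_one

variable {X Y : Type*} [MetricSpace X] [MetricSpace Y] {f : Y → X}

theorem injective_of_dist_eq_dist_rpow (hα : α ≠ 0)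
    (hf : ∀ a b, dist (f a) (f b) = dist a b ^ α) : Function.Injective f := by
  intro a b hab
  rwa [← dist_eq_zero, hf, Real.rpow_eq_zero dist_nonneg hα, dist_eq_zero] at hab

theorem compAngle_le_of_dist_eq_dist_rpow (hα₀ : 0 ≤ α) (hα₁ : α ≤ 1)
    (hf : ∀ a b, dist (f a) (f b) = dist a b ^ α) {p a b : Y} (ha : f a ≠ f p) (hb : f b ≠ f p) :
    compAngle (f p) (f a) (f b) ≤ Real.pi - Real.arccos α := by
  apply compAngle_le_pi_sub_arccos ha hb
  rw [hf, hf, hf]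
  exact sq_rpow_le_of_le_add hα₀ hα₁ dist_nonneg dist_nonneg dist_nonneg
    (dist_triangle_right a b p)

theorem atb_prevents_large_snowflakes_general (hα₀ : 0 < α) (hα₁ : α ≤ 1) {L : ℕ} {R : ℝ}
    (hf : ∀ a b, dist (f a) (f b) = dist a b ^ α) (hdist : ∀ a b, dist (f a) (f b) < R)
    (hatb : ∀ a, ATBPoint (Real.arccos α / 2) (f a) L R) (s : Finset Y) :
    #s < vertexIndepBound L L := by
  classical
  rw [← card_image_of_injective s (injective_of_dist_eq_dist_rpow hα₀.ne' hf)]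
  apply card_lt_vertexIndepBound_of_compAngle_le (ε := Real.arccos α / 2) (R := R) <;>
    simp only [forall_mem_image]
  · intro p _ a _ b _ ha hb
    rw [mul_div_cancel₀ _ two_ne_zero]
    exact compAngle_le_of_dist_eq_dist_rpow hα₀.le hα₁ hf ha hb
  · exact fun p _ a _ ↦ hdist a p
  · exact fun p _ ↦ hatb p

end Snowflake

/-- If every point of `B_R(x)` satisfies `ATB(arccos α / 2)` with constants `L` and `2R`,
then there is `N`, depending only on `L`, such that for any metric space `Y` of
cardinality at least `N`, the `α`-snowflake `(Y, d_Y^α)` admits no isometric embedding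
into `B_R(x)`. -/
theorem atb_prevents_large_snowflakes :
    ∀ L : ℕ, ∃ N : ℕ,
      ∀ (X : Type) [MetricSpace X], ∀ α : ℝ, 0 < α → α < 1 →
        ∀ (x : X) (R : ℝ), 0 < R →
          (∀ p ∈ Metric.ball x R, ATBPoint (Real.arccos α / 2) p L (2 * R)) →
          ∀ (Y : Type) [MetricSpace Y], (∃ s : Finset Y, s.card = N) →
            ¬ ∃ f : Y → X, (∀ a b : Y, dist (f a) (f b) = dist a b ^ α) ∧
              ∀ a : Y, f a ∈ Metric.ball x R := by
  refine fun L ↦ ⟨vertexIndepBound L L, ?_⟩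
  rintro X _ α hα₀ hα₁ x R - hatb Y _ ⟨s, hs⟩ ⟨f, hf, hfR⟩
  have hdist (a b : Y) : dist (f a) (f b) < 2 * R := by
    linarith [dist_triangle_right (f a) (f b) x, Metric.mem_ball.mp (hfR a),
      Metric.mem_ball.mp (hfR b)]
  exact (atb_prevents_large_snowflakes_general hα₀ hα₁.le hf hdist (fun a ↦ hatb _ (hfR a)) s).ne hs
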